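/- Let N ∈ ℕ, let U : ℝ² → ℝ be measurable, vanish outside Π, and satisfy ∫_Π U(y)² dy = 1, and let w_1, …, w_N : ℝ → ℝ be measurable with ∫_ℝ w_j w_k dζ = δ_{jk} and |w_j(ζ)| ≤ C e^{−b|ζ|} for all ζ and some C, b > 0. Then there exists c_N > 0 such that for every H ≥ 1 and all j, k ∈ {1, …, N} the ellipsoidal trial functions satisfy |∫_{Q^H} Φ_j^H(x) Φ_k^H(x) dx − δ_{jk}| ≤ c_N H^{−1/2}. -/

import Mathlib

noncomputable section
open MeasureTheory Real

abbrev E2 : Type := EuclideanSpace ℝ (Fin 2)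
abbrev E3 : Type := EuclideanSpace ℝ (Fin 3)

/-- The planar cross `Π = {y ∈ ℝ² : |y₁| < 1/2 or |y₂| < 1/2}`. -/
def planarCross : Set E2 := {y | |y 0| < 1 / 2 ∨ |y 1| < 1 / 2}

/-- The ellipsoidal cruciform waveguide
`Q^H = {x ∈ ℝ³ : x₂² + x₃²/H² < 1/4 or x₁² + x₃²/H² < 1/4}`. -/
def ellipticWaveguide (H : ℝ) : Set E3 :=
  {x | (x 1) ^ 2 + (x 2) ^ 2 / H ^ 2 < 1 / 4 ∨ (x 0) ^ 2 + (x 2) ^ 2 / H ^ 2 < 1 / 4}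

/-- The width function `h(z) = √(1 − 4z²/H²)` of the ellipsoidal waveguide. -/
def hEll (H z : ℝ) : ℝ := Real.sqrt (1 - 4 * z ^ 2 / H ^ 2)

/-- The ellipsoidal trial function
`Φ^H(x) = H^{−1/8} χ(2H^{−1/2}ζ) w(ζ) U(x₁/h(x₃), x₂/h(x₃))`, `ζ = H^{−1/4}x₃`,
for `|x₃| < H/2`, extended by zero for `|x₃| ≥ H/2`. -/
def trialEll (χ : ℝ → ℝ) (w : ℝ → ℝ) (U : E2 → ℝ) (H : ℝ) (x : E3) : ℝ :=
  if |x 2| < H / 2 then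
    H ^ (-(1 : ℝ) / 8) * χ (2 * H ^ (-(1 : ℝ) / 2) * (H ^ (-(1 : ℝ) / 4) * x 2)) *
      w (H ^ (-(1 : ℝ) / 4) * x 2) *
      U ((EuclideanSpace.equiv (Fin 2) ℝ).symm
          ![x 0 / hEll H (x 2), x 1 / hEll H (x 2)])
  else 0

/-! In the coordinates `ζ = H^{-1/4} x₃` and `y = (x₁, x₂) / h(x₃)` the waveguide straightens to
`Π × ℝ`, and `∫ Φ_j Φ_k` becomes `∫_Π U²` times `∫ w_j w_k ρ_H`, where the weight `ρ_H` collects the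
squared cutoff and the Jacobian `h²`. Since `|ρ_H(ζ) - 1| ≤ 64 (1 + ζ²) H^{-1/2}`, the error is
controlled by the second moments of the products `w_j w_k`. -/

section FubiniScaling

variable {α E F : Type*} [MeasurableSpace α] {ν : Measure α}
  [NormedAddCommGroup E] [NormedSpace ℝ E] [FiniteDimensional ℝ E] [MeasurableSpace E]
  [BorelSpace E] {μ : Measure E} [μ.IsAddHaarMeasure] [NormedAddCommGroup F] [NormedSpace ℝ F]

lemma integrable_prod_smul_comp_inv_smul {f h : α → ℝ} {V : E → F}
    (hf : AEStronglyMeasurable f ν) (hh : Measurable h) (hVm : StronglyMeasurable V)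
    (hV : Integrable V μ) (hfh : ∀ z, f z ≠ 0 → h z ≠ 0)
    (hint : Integrable (fun z ↦ f z * |h z ^ Module.finrank ℝ E|) ν) :
    Integrable (fun p : α × E ↦ f p.1 • V ((h p.1)⁻¹ • p.2)) (ν.prod μ) := by
  have : ProperSpace E := FiniteDimensional.proper ℝ E
  have hscale : Measurable fun p : α × E ↦ (h p.1)⁻¹ • p.2 := by fun_prop
  have hmeas := hf.comp_fst.smul (hVm.comp_measurable hscale).aestronglyMeasurable (μ := ν.prod μ)
  refine (integrable_prod_iff hmeas).2 ⟨.of_forall fun z ↦ ?_, ?_⟩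
  · by_cases hz : f z = 0
    · simp [hz]
    · exact ((integrable_comp_smul_iff μ V (inv_ne_zero (hfh z hz))).2 hV).smul (f z)
  · have hfibre (z : α) : ∫ y, ‖f z • V ((h z)⁻¹ • y)‖ ∂μ =
        ‖f z * |h z ^ Module.finrank ℝ E|‖ * ∫ y, ‖V y‖ ∂μ := by
      simp only [norm_smul, integral_const_mul]
      rw [Measure.integral_comp_inv_smul μ (fun y ↦ ‖V y‖), smul_eq_mul, norm_mul,
        Real.norm_eq_abs |_|, abs_abs, mul_assoc]
    exact (hint.norm.mul_const _).congr (.of_forall fun z ↦ (hfibre z).symm)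

lemma integral_prod_smul_comp_inv_smul [SFinite ν] [CompleteSpace F] {f h : α → ℝ} {V : E → F}
    (hf : AEStronglyMeasurable f ν) (hh : Measurable h) (hVm : StronglyMeasurable V)
    (hV : Integrable V μ) (hfh : ∀ z, f z ≠ 0 → h z ≠ 0)
    (hint : Integrable (fun z ↦ f z * |h z ^ Module.finrank ℝ E|) ν) :
    ∫ p : α × E, f p.1 • V ((h p.1)⁻¹ • p.2) ∂ν.prod μ =
      (∫ z, f z * |h z ^ Module.finrank ℝ E| ∂ν) • ∫ y, V y ∂μ := by
  rw [integral_prod _ (integrable_prod_smul_comp_inv_smul hf hh hVm hV hfh hint),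
    ← integral_smul_const]
  simp only [integral_smul, Measure.integral_comp_inv_smul, smul_smul]

lemma integral_euclideanSpace_comp_removeNth {n : ℕ} (i : Fin (n + 1))
    (f : ℝ × EuclideanSpace ℝ (Fin n) → F) :
    ∫ x : EuclideanSpace ℝ (Fin (n + 1)), f (x i, WithLp.toLp 2 (i.removeNth x)) =
      ∫ p, f p := by
  have hsplit := (EuclideanSpace.volume_preserving_symm_measurableEquiv_toLp (Fin (n + 1))).trans
    (volume_preserving_piFinSuccAbove (fun _ ↦ ℝ) i)
  have htoLp : MeasurePreserving
      ((MeasurableEquiv.refl ℝ).prodCongr (MeasurableEquiv.toLp 2 (Fin n → ℝ))) :=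
    (MeasurePreserving.id volume).prod
      (EuclideanSpace.volume_preserving_symm_measurableEquiv_toLp (Fin n)).symm
  exact (hsplit.trans htoLp).integral_comp' f

end FubiniScaling

section ExponentialDecay

lemma integrable_norm_pow_mul_exp_neg_mul_norm {E : Type*} [NormedAddCommGroup E]
    [NormedSpace ℝ E] [FiniteDimensional ℝ E] [Nontrivial E] [MeasurableSpace E] [BorelSpace E]
    (μ : Measure E) [μ.IsAddHaarMeasure] (n : ℕ) {b : ℝ} (hb : 0 < b) :
    Integrable (fun x : E ↦ ‖x‖ ^ n * exp (-b * ‖x‖)) μ := by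
  rw [integrable_fun_norm_addHaar μ (f := fun r ↦ r ^ n * exp (-b * r))]
  have hpos : (-1 : ℝ) < ((Module.finrank ℝ E - 1 + n : ℕ) : ℝ) :=
    neg_one_lt_zero.trans_le (Nat.cast_nonneg _)
  refine (integrableOn_rpow_mul_exp_neg_mul_rpow hpos one_pos hb).congr_fun
    (fun r _ ↦ ?_) measurableSet_Ioi
  simp only [rpow_natCast, rpow_one, smul_eq_mul, pow_add, mul_assoc]

variable {P : ℝ → ℝ} {A b : ℝ}

lemma integrable_one_add_sq_mul_exp_neg_mul_abs (hb : 0 < b) :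
    Integrable fun ζ : ℝ ↦ (1 + ζ ^ 2) * (A * exp (-b * |ζ|)) := by
  have h := ((integrable_norm_pow_mul_exp_neg_mul_norm (volume : Measure ℝ) 0 hb).add
    (integrable_norm_pow_mul_exp_neg_mul_norm volume 2 hb)).const_mul A
  refine h.congr (.of_forall fun ζ ↦ ?_)
  simp only [Pi.add_apply, norm_eq_abs, sq_abs]
  ring

lemma norm_one_add_sq_mul_le {ζ p r : ℝ} (h : |p| ≤ r) :
    ‖(1 + ζ ^ 2) * p‖ ≤ (1 + ζ ^ 2) * r := by
  rw [norm_mul, norm_of_nonneg (by positivity), norm_eq_abs]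
  gcongr

lemma integrable_one_add_sq_mul_of_abs_le_exp (hb : 0 < b) (hPm : AEStronglyMeasurable P)
    (hP : ∀ ζ, |P ζ| ≤ A * exp (-b * |ζ|)) : Integrable fun ζ ↦ (1 + ζ ^ 2) * P ζ :=
  (integrable_one_add_sq_mul_exp_neg_mul_abs hb).mono' (by fun_prop)
    (.of_forall fun ζ ↦ norm_one_add_sq_mul_le (hP ζ))

lemma integral_norm_one_add_sq_mul_le_of_abs_le_exp (hb : 0 < b)
    (hP : ∀ ζ, |P ζ| ≤ A * exp (-b * |ζ|)) :
    ∫ ζ, ‖(1 + ζ ^ 2) * P ζ‖ ≤ ∫ ζ, (1 + ζ ^ 2) * (A * exp (-b * |ζ|)) :=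
  integral_mono_of_nonneg (.of_forall fun _ ↦ norm_nonneg _)
    (integrable_one_add_sq_mul_exp_neg_mul_abs hb)
    (.of_forall fun ζ ↦ norm_one_add_sq_mul_le (hP ζ))

lemma abs_mul_le_mul_exp_neg_add {p q t A B a b : ℝ} (hp : |p| ≤ A * exp (-a * t))
    (hq : |q| ≤ B * exp (-b * t)) : |p * q| ≤ A * B * exp (-(a + b) * t) :=
  calc |p * q| ≤ A * exp (-a * t) * (B * exp (-b * t)) := by
        rw [abs_mul]
        exact mul_le_mul hp hq (abs_nonneg _) ((abs_nonneg _).trans hp)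
    _ = A * B * exp (-(a + b) * t) := by
        rw [mul_mul_mul_comm, ← exp_add]
        ring_nf

end ExponentialDecay

section WidthFunction

variable {H z : ℝ}

lemma hEll_pos_iff (hH : 0 < H) : 0 < hEll H z ↔ |z| < H / 2 := by
  rw [hEll, Real.sqrt_pos, sub_pos, div_lt_one (by positivity), ← abs_of_pos (half_pos hH),
    ← sq_lt_sq, div_pow, lt_div_iff₀ (by norm_num)]
  norm_num [mul_comm]

lemma hEll_sq (hH : 0 < H) (hz : |z| < H / 2) : hEll H z ^ 2 = 1 - 4 * z ^ 2 / H ^ 2 :=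
  sq_sqrt (sqrt_pos.1 ((hEll_pos_iff hH).2 hz)).le

lemma hEll_le_one : hEll H z ≤ 1 :=
  sqrt_le_one.2 (sub_le_self 1 (by positivity))

lemma one_sub_le_hEll_sq : 1 - 4 * z ^ 2 / H ^ 2 ≤ hEll H z ^ 2 :=
  sq_sqrt' (x := 1 - 4 * z ^ 2 / H ^ 2) ▸ le_max_left _ _

@[fun_prop]
lemma measurable_hEll : Measurable (hEll H) := by
  unfold hEll
  fun_prop

lemma abs_div_hEll_lt_half_iff (hH : 0 < H) (hz : |z| < H / 2) (u : ℝ) :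
    |u / hEll H z| < 1 / 2 ↔ u ^ 2 + z ^ 2 / H ^ 2 < 1 / 4 := by
  have hpos : 0 < hEll H z := (hEll_pos_iff hH).2 hz
  rw [← abs_of_pos (one_half_pos (α := ℝ)), ← sq_lt_sq, div_pow, div_lt_iff₀ (by positivity),
    hEll_sq hH hz, mul_div_assoc]
  constructor <;> intro _ <;> linarith

lemma mem_ellipticWaveguide_iff (hH : 0 < H) {x : E3} (hx : |x 2| < H / 2) :
    x ∈ ellipticWaveguide H ↔
      (hEll H (x 2))⁻¹ • (WithLp.toLp 2 ![x 0, x 1] : E2) ∈ planarCross := by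
  rw [ellipticWaveguide, Set.mem_ofPred_eq, ← abs_div_hEll_lt_half_iff hH hx,
    ← abs_div_hEll_lt_half_iff hH hx, or_comm]
  simp [planarCross, div_eq_inv_mul]

end WidthFunction

/-- The weight `χ(2H^{−1/2}ζ)² h(H^{1/4}ζ)²` against which `v w` is integrated, in the rescaled
longitudinal variable `ζ`, after the cross-sections have been integrated out of `∫ Φ_v^H Φ_w^H`. -/
def ellWeight (χ : ℝ → ℝ) (H ζ : ℝ) : ℝ :=
  (χ (2 * H ^ (-(1 : ℝ) / 2) * ζ) * hEll H (H ^ ((1 : ℝ) / 4) * ζ)) ^ 2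

section EllWeight

variable {χ : ℝ → ℝ} {H ζ : ℝ}

lemma measurable_ellWeight (hχ : Measurable χ) : Measurable (ellWeight χ H) := by
  unfold ellWeight
  fun_prop

lemma ellWeight_nonneg : 0 ≤ ellWeight χ H ζ := sq_nonneg _

lemma ellWeight_le_one (hχ : ∀ τ, |χ τ| ≤ 1) : ellWeight χ H ζ ≤ 1 := by
  rw [ellWeight, mul_pow]
  exact mul_le_one₀ ((sq_le_one_iff_abs_le_one _).2 (hχ _)) (sq_nonneg _)
    (pow_le_one₀ (sqrt_nonneg _) hEll_le_one)

lemma sq_rpow_one_fourth_mul_div_sq (hH : 0 < H) :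
    (H ^ ((1 : ℝ) / 4) * ζ) ^ 2 / H ^ 2 = ζ ^ 2 * (H ^ (-(1 : ℝ) / 2)) ^ 3 := by
  have hpow : (H ^ ((1 : ℝ) / 4)) ^ 2 = (H ^ (-(1 : ℝ) / 2)) ^ 3 * H ^ 2 := by
    simp only [← rpow_natCast, ← rpow_mul hH.le, ← rpow_add hH]
    norm_num
  rw [mul_pow, hpow]
  field_simp

/-- Where `64 (1 + ζ²) H^{−1/2} < 1` the cutoff equals `1`, and only the `4z²/H²` lost by `h²`
remains; elsewhere the trivial bound `1` suffices. -/
lemma abs_ellWeight_sub_one_le (hχ : ∀ τ, |χ τ| ≤ 1) (hχ1 : ∀ τ, |τ| ≤ 1 / 4 → χ τ = 1)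
    (hH : 0 < H) : |ellWeight χ H ζ - 1| ≤ 64 * H ^ (-(1 : ℝ) / 2) * (1 + ζ ^ 2) := by
  rw [abs_sub_comm, abs_of_nonneg (sub_nonneg.2 (ellWeight_le_one hχ))]
  have hloss := one_sub_le_hEll_sq (H := H) (z := H ^ ((1 : ℝ) / 4) * ζ)
  rw [mul_div_assoc, sq_rpow_one_fourth_mul_div_sq hH] at hloss
  rw [ellWeight]
  have ht : 0 < H ^ (-(1 : ℝ) / 2) := rpow_pos_of_pos hH _
  set t := H ^ (-(1 : ℝ) / 2)
  rcases le_or_gt 1 (64 * t * (1 + ζ ^ 2)) with hlarge | hsmall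
  · exact (sub_le_self 1 (sq_nonneg _)).trans hlarge
  · have htζ : 0 ≤ t * ζ ^ 2 := by positivity
    have ht1 : t ≤ 1 := by linarith
    have hcut : χ (2 * t * ζ) = 1 := by
      refine hχ1 _ (abs_le_of_sq_le_sq ?_ (by norm_num))
      calc (2 * t * ζ) ^ 2 = 4 * (t * (t * ζ ^ 2)) := by ring
        _ ≤ 4 * (1 * (t * ζ ^ 2)) := by gcongr
        _ ≤ (1 / 4) ^ 2 := by linarith
    calc 1 - (χ (2 * t * ζ) * hEll H (H ^ ((1 : ℝ) / 4) * ζ)) ^ 2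
        ≤ 4 * (ζ ^ 2 * t ^ 3) := by rw [hcut, one_mul]; linarith
      _ ≤ 4 * (ζ ^ 2 * t) := by gcongr; exact pow_le_of_le_one ht.le ht1 three_ne_zero
      _ ≤ 64 * t * (1 + ζ ^ 2) := by linarith

lemma integrable_mul_ellWeight (hχm : Measurable χ) (hχ : ∀ τ, |χ τ| ≤ 1) {P : ℝ → ℝ}
    (hP : Integrable P) : Integrable fun ζ ↦ P ζ * ellWeight χ H ζ :=
  hP.mul_bdd (measurable_ellWeight hχm).aestronglyMeasurable
    (.of_forall fun _ ↦ (norm_of_nonneg ellWeight_nonneg).trans_le (ellWeight_le_one hχ))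

lemma abs_integral_mul_ellWeight_sub_le (hχm : Measurable χ) (hχ : ∀ τ, |χ τ| ≤ 1)
    (hχ1 : ∀ τ, |τ| ≤ 1 / 4 → χ τ = 1) (hH : 0 < H) {P : ℝ → ℝ} (hP : Integrable P)
    (hP2 : Integrable fun ζ ↦ (1 + ζ ^ 2) * P ζ) :
    |(∫ ζ, P ζ * ellWeight χ H ζ) - ∫ ζ, P ζ| ≤
      64 * H ^ (-(1 : ℝ) / 2) * ∫ ζ, ‖(1 + ζ ^ 2) * P ζ‖ := by
  rw [← integral_sub (integrable_mul_ellWeight hχm hχ hP) hP, ← integral_const_mul, ← norm_eq_abs]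
  refine norm_integral_le_of_norm_le (hP2.norm.const_mul _) (.of_forall fun ζ ↦ ?_)
  calc ‖P ζ * ellWeight χ H ζ - P ζ‖ = |P ζ| * |ellWeight χ H ζ - 1| := by
        rw [← abs_mul, mul_sub_one, norm_eq_abs]
    _ ≤ |P ζ| * (64 * H ^ (-(1 : ℝ) / 2) * (1 + ζ ^ 2)) := by
        gcongr
        exact abs_ellWeight_sub_one_le hχ hχ1 hH
    _ = 64 * H ^ (-(1 : ℝ) / 2) * ‖(1 + ζ ^ 2) * P ζ‖ := by
        rw [norm_mul, norm_of_nonneg (by positivity : (0 : ℝ) ≤ 1 + ζ ^ 2), norm_eq_abs]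
        ring

end EllWeight

/-- The longitudinal factor of `Φ_v^H Φ_w^H`, for `P = v w`: at height `z` this product is
`longitudinalFactor χ P H z * U(y / h(z))²`, with `y` the horizontal coordinates. -/
def longitudinalFactor (χ P : ℝ → ℝ) (H : ℝ) : ℝ → ℝ :=
  {z | |z| < H / 2}.indicator fun z ↦ H ^ (-(1 : ℝ) / 4) *
    (χ (2 * H ^ (-(1 : ℝ) / 2) * (H ^ (-(1 : ℝ) / 4) * z)) ^ 2 * P (H ^ (-(1 : ℝ) / 4) * z))

section LongitudinalFactor

variable {χ P : ℝ → ℝ} {H : ℝ}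

lemma aestronglyMeasurable_longitudinalFactor (hχ : Measurable χ) (hP : Integrable P)
    (hH : 0 < H) : AEStronglyMeasurable (longitudinalFactor χ P H) := by
  have hPscaled := (hP.comp_mul_left' (rpow_pos_of_pos hH (-(1 : ℝ) / 4)).ne').aestronglyMeasurable
  have hcut : Measurable fun z : ℝ ↦
      χ (2 * H ^ (-(1 : ℝ) / 2) * (H ^ (-(1 : ℝ) / 4) * z)) ^ 2 := by fun_prop
  exact ((hcut.aestronglyMeasurable.mul hPscaled).const_mul _).indicator
    (measurableSet_lt measurable_norm measurable_const)

lemma hEll_ne_zero_of_longitudinalFactor_ne_zero (hH : 0 < H) {z : ℝ}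
    (hz : longitudinalFactor χ P H z ≠ 0) : hEll H z ≠ 0 :=
  ((hEll_pos_iff hH).2 (Set.mem_of_indicator_ne_zero (s := {z | |z| < H / 2}) hz)).ne'

/-- Outside `|z| < H/2` both sides vanish, as `h` is the square root of a nonpositive number. -/
lemma longitudinalFactor_mul_hEll_sq (hH : 0 < H) (z : ℝ) :
    longitudinalFactor χ P H z * hEll H z ^ 2 = H ^ (-(1 : ℝ) / 4) *
      (P (H ^ (-(1 : ℝ) / 4) * z) * ellWeight χ H (H ^ (-(1 : ℝ) / 4) * z)) := by
  have hinv : H ^ ((1 : ℝ) / 4) * (H ^ (-(1 : ℝ) / 4) * z) = z := by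
    rw [← mul_assoc, ← rpow_add hH]
    norm_num
  rw [ellWeight, hinv]
  by_cases hz : |z| < H / 2
  · rw [longitudinalFactor, Set.indicator_of_mem (by exact hz)]
    ring
  · have hzero : hEll H z = 0 :=
      le_antisymm (not_lt.1 ((hEll_pos_iff hH).not.2 hz)) (sqrt_nonneg _)
    simp [hzero]

lemma integral_longitudinalFactor_mul_hEll_sq (hH : 0 < H) :
    ∫ z, longitudinalFactor χ P H z * hEll H z ^ 2 = ∫ ζ, P ζ * ellWeight χ H ζ := by
  have hs : 0 < H ^ (-(1 : ℝ) / 4) := rpow_pos_of_pos hH _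
  simp only [longitudinalFactor_mul_hEll_sq hH, integral_const_mul]
  rw [Measure.integral_comp_mul_left (fun ζ ↦ P ζ * ellWeight χ H ζ), abs_of_pos (inv_pos.2 hs),
    smul_eq_mul, mul_inv_cancel_left₀ hs.ne']

lemma integrable_longitudinalFactor_mul_hEll_sq (hχm : Measurable χ) (hχ : ∀ τ, |χ τ| ≤ 1)
    (hP : Integrable P) (hH : 0 < H) :
    Integrable fun z ↦ longitudinalFactor χ P H z * hEll H z ^ 2 := by
  simp only [longitudinalFactor_mul_hEll_sq hH]
  exact ((integrable_mul_ellWeight hχm hχ hP).comp_mul_left'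
    (rpow_pos_of_pos hH (-(1 : ℝ) / 4)).ne').const_mul _

end LongitudinalFactor

section TrialFunctions

variable {χ : ℝ → ℝ} {U : E2 → ℝ} {v w : ℝ → ℝ} {H : ℝ}

lemma trialEll_mul_trialEll (hH : 0 < H) (x : E3) :
    trialEll χ v U H x * trialEll χ w U H x =
      longitudinalFactor χ (fun ζ ↦ v ζ * w ζ) H (x 2) *
        U ((hEll H (x 2))⁻¹ • WithLp.toLp 2 ![x 0, x 1]) ^ 2 := by
  have harg : (EuclideanSpace.equiv (Fin 2) ℝ).symm ![x 0 / hEll H (x 2), x 1 / hEll H (x 2)] =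
      (hEll H (x 2))⁻¹ • WithLp.toLp 2 ![x 0, x 1] := by
    ext i
    fin_cases i <;> simp [div_eq_inv_mul]
  have hnorm : H ^ (-(1 : ℝ) / 4) = H ^ (-(1 : ℝ) / 8) * H ^ (-(1 : ℝ) / 8) := by
    rw [← rpow_add hH]
    norm_num
  rw [trialEll, trialEll, harg, longitudinalFactor, Set.indicator_apply]
  split_ifs with hin hmem hmem
  · linear_combination -(χ (2 * H ^ (-(1 : ℝ) / 2) * (H ^ (-(1 : ℝ) / 4) * x 2)) ^ 2 *
      (v (H ^ (-(1 : ℝ) / 4) * x 2) * w (H ^ (-(1 : ℝ) / 4) * x 2)) *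
      U ((hEll H (x 2))⁻¹ • WithLp.toLp 2 ![x 0, x 1]) ^ 2) * hnorm
  · exact absurd hin hmem
  · exact absurd hmem hin
  · simp

lemma trialEll_eq_zero_of_notMem (hU0 : ∀ y ∉ planarCross, U y = 0) (hH : 0 < H) {x : E3}
    (hx : x ∉ ellipticWaveguide H) :
    trialEll χ w U H x = 0 := by
  rw [← mul_self_eq_zero, trialEll_mul_trialEll hH]
  by_cases hz : |x 2| < H / 2
  · rw [hU0 _ ((mem_ellipticWaveguide_iff hH hz).not.1 hx)]
    simp
  · rw [longitudinalFactor, Set.indicator_of_notMem (by exact hz), zero_mul]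

lemma setIntegral_trialEll_mul_trialEll (hχm : Measurable χ) (hχ : ∀ τ, |χ τ| ≤ 1)
    (hUm : Measurable U) (hU0 : ∀ y ∉ planarCross, U y = 0)
    (hU : IntegrableOn (fun y ↦ U y ^ 2) planarCross)
    (hvw : Integrable fun ζ ↦ v ζ * w ζ) (hH : 0 < H) :
    ∫ x in ellipticWaveguide H, trialEll χ v U H x * trialEll χ w U H x =
      (∫ y in planarCross, U y ^ 2) * ∫ ζ, v ζ * w ζ * ellWeight χ H ζ := by
  have hU0' : ∀ y ∉ planarCross, U y ^ 2 = 0 := fun y hy ↦ by rw [hU0 y hy, zero_pow two_ne_zero]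
  have harea (z : ℝ) : |hEll H z ^ Module.finrank ℝ E2| = hEll H z ^ 2 := by
    rw [finrank_euclideanSpace_fin, abs_of_nonneg (sq_nonneg _)]
  have hU' : Integrable fun y ↦ U y ^ 2 :=
    (integrableOn_iff_integrable_of_support_subset
      (Function.support_subset_iff'.2 hU0')).1 hU
  have hscaling := integral_prod_smul_comp_inv_smul (μ := (volume : Measure E2))
    (aestronglyMeasurable_longitudinalFactor hχm hvw hH) measurable_hEll
    (hUm.pow_const 2).stronglyMeasurable hU'
    (fun _ ↦ hEll_ne_zero_of_longitudinalFactor_ne_zero hH)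
    (by simpa only [harea] using integrable_longitudinalFactor_mul_hEll_sq hχm hχ hvw hH)
  have hhorizontal (x : E3) : Fin.removeNth 2 x = ![x 0, x 1] := by
    funext i
    fin_cases i <;> rfl
  rw [setIntegral_eq_integral_of_forall_compl_eq_zero fun x hx ↦ by
      rw [trialEll_eq_zero_of_notMem hU0 hH hx, zero_mul],
    setIntegral_eq_integral_of_forall_compl_eq_zero hU0', mul_comm,
    ← integral_longitudinalFactor_mul_hEll_sq hH]
  simp only [harea, smul_eq_mul, ← Measure.volume_eq_prod] at hscaling
  rw [← hscaling, ← integral_euclideanSpace_comp_removeNth 2]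
  simp only [hhorizontal, trialEll_mul_trialEll hH]

lemma abs_setIntegral_trialEll_mul_trialEll_sub_le (hχm : Measurable χ) (hχ : ∀ τ, |χ τ| ≤ 1)
    (hχ1 : ∀ τ, |τ| ≤ 1 / 4 → χ τ = 1) (hUm : Measurable U)
    (hU0 : ∀ y ∉ planarCross, U y = 0) (hU : IntegrableOn (fun y ↦ U y ^ 2) planarCross)
    (hvw : Integrable fun ζ ↦ (1 + ζ ^ 2) * (v ζ * w ζ)) (hH : 0 < H) :
    |(∫ x in ellipticWaveguide H, trialEll χ v U H x * trialEll χ w U H x) -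
        (∫ y in planarCross, U y ^ 2) * ∫ ζ, v ζ * w ζ| ≤
      64 * (∫ y in planarCross, U y ^ 2) * (∫ ζ, ‖(1 + ζ ^ 2) * (v ζ * w ζ)‖) *
        H ^ (-(1 : ℝ) / 2) := by
  have hvw0 : Integrable fun ζ ↦ v ζ * w ζ := by
    have hinv (ζ : ℝ) : ‖(1 + ζ ^ 2)⁻¹‖ ≤ 1 := by
      rw [norm_of_nonneg (by positivity)]
      exact inv_le_one_of_one_le₀ (le_add_of_nonneg_right (sq_nonneg ζ))
    refine (hvw.bdd_mul (by fun_prop) (.of_forall hinv)).congr (.of_forall fun ζ ↦ ?_)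
    exact inv_mul_cancel_left₀ (by positivity) _
  have hU2 : 0 ≤ ∫ y in planarCross, U y ^ 2 := integral_nonneg fun _ ↦ sq_nonneg _
  rw [setIntegral_trialEll_mul_trialEll hχm hχ hUm hU0 hU hvw0 hH, ← mul_sub, abs_mul,
    abs_of_nonneg hU2]
  refine (mul_le_mul_of_nonneg_left
    (abs_integral_mul_ellWeight_sub_le hχm hχ hχ1 hH hvw0 hvw) hU2).trans_eq ?_
  ring

end TrialFunctions

theorem elliptic_trial_almost_orthonormal_general {ι : Type*} {χ : ℝ → ℝ} (hχm : Measurable χ)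
    (hχ : ∀ τ, |χ τ| ≤ 1) (hχ1 : ∀ τ, |τ| ≤ 1 / 4 → χ τ = 1) {U : E2 → ℝ} (hUm : Measurable U)
    (hU0 : ∀ y ∉ planarCross, U y = 0) (hU : IntegrableOn (fun y ↦ U y ^ 2) planarCross)
    {w : ι → ℝ → ℝ} {M : ℝ} (hw : ∀ j k, Integrable fun ζ ↦ (1 + ζ ^ 2) * (w j ζ * w k ζ))
    (hM : ∀ j k, ∫ ζ, ‖(1 + ζ ^ 2) * (w j ζ * w k ζ)‖ ≤ M) :
    ∃ c : ℝ, 0 < c ∧ ∀ H : ℝ, 0 < H → ∀ j k,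
      |(∫ x in ellipticWaveguide H, trialEll χ (w j) U H x * trialEll χ (w k) U H x) -
          (∫ y in planarCross, U y ^ 2) * ∫ ζ, w j ζ * w k ζ| ≤ c * H ^ (-(1 : ℝ) / 2) := by
  refine ⟨max 1 (64 * (∫ y in planarCross, U y ^ 2) * M), by positivity, fun H hH j k ↦ ?_⟩
  refine (abs_setIntegral_trialEll_mul_trialEll_sub_le hχm hχ hχ1 hUm hU0 hU (hw j k) hH).trans ?_
  gcongr
  exact (mul_le_mul_of_nonneg_left (hM j k) (by positivity)).trans (le_max_right _ _)

theorem elliptic_trial_almost_orthonormal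
    (N : ℕ)
    (χ : ℝ → ℝ) (hχ : ContDiff ℝ (⊤ : ℕ∞) χ) (hχ01 : ∀ τ, 0 ≤ χ τ ∧ χ τ ≤ 1)
    (hχ1 : ∀ τ : ℝ, |τ| ≤ 1 / 4 → χ τ = 1) (hχ0 : ∀ τ : ℝ, 1 / 2 ≤ |τ| → χ τ = 0)
    (U : E2 → ℝ) (hUmeas : Measurable U)
    (hU0 : ∀ y ∉ planarCross, U y = 0)
    (hUnorm : ∫ y in planarCross, (U y) ^ 2 = 1)
    (w : Fin N → ℝ → ℝ) (hwmeas : ∀ j, Measurable (w j))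
    (horth : ∀ j k, ∫ ζ : ℝ, w j ζ * w k ζ = if j = k then (1 : ℝ) else 0)
    (C b : ℝ) (hC : 0 < C) (hb : 0 < b)
    (hdecay : ∀ j, ∀ ζ : ℝ, |w j ζ| ≤ C * Real.exp (-b * |ζ|)) :
    ∃ c : ℝ, 0 < c ∧ ∀ H : ℝ, 1 ≤ H → ∀ j k,
      |(∫ x in ellipticWaveguide H, trialEll χ (w j) U H x * trialEll χ (w k) U H x) -
          (if j = k then (1 : ℝ) else 0)| ≤ c * H ^ (-(1 : ℝ) / 2) := by
  have hproduct (j k : Fin N) (ζ : ℝ) :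
      |w j ζ * w k ζ| ≤ C * C * exp (-(b + b) * |ζ|) :=
    abs_mul_le_mul_exp_neg_add (hdecay j ζ) (hdecay k ζ)
  obtain ⟨c, hc, hbound⟩ := elliptic_trial_almost_orthonormal_general hχ.continuous.measurable
    (fun τ ↦ (abs_of_nonneg (hχ01 τ).1).trans_le (hχ01 τ).2) hχ1 hUmeas hU0
    (integrable_of_integral_eq_one hUnorm)
    (fun j k ↦ integrable_one_add_sq_mul_of_abs_le_exp (add_pos hb hb)
      ((hwmeas j).mul (hwmeas k)).aestronglyMeasurable (hproduct j k))
    (fun j k ↦ integral_norm_one_add_sq_mul_le_of_abs_le_exp (add_pos hb hb) (hproduct j k))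
  exact ⟨c, hc, fun H hH j k ↦ by
    simpa only [hUnorm, one_mul, horth] using hbound H (one_pos.trans_le hH) j k⟩
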